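/- For every integer n ≥ 3, the secure domination number of the flower snark J_n equals ⌈(3n+1)/2⌉. -/

import Mathlib

/-- Vertices of the flower snark `J_n`: a copy index `i : Fin n` together with
one of the four vertices of the copy: `0 = a`, `1 = b`, `2 = c`, `3 = d`. -/
abbrev FV (n : ℕ) := Fin n × Fin 4

/-- The flower snark `J_n`: in each copy, `a^i` is adjacent to `b^i, c^i, d^i`;
the `b` vertices form an `n`-cycle; the `c` and `d` vertices form a `2n`-cycle
via the paths `c^i c^{i+1}`, `d^i d^{i+1}` (for `1 ≤ i ≤ n-1`) together with the
twist edges `c^n d^1` and `d^n c^1`. -/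
def flowerSnark (n : ℕ) : SimpleGraph (FV n) :=
  SimpleGraph.fromRel (fun v w =>
    (v.1 = w.1 ∧ v.2 = 0 ∧ w.2 ≠ 0) ∨
    (((v.1 : ℕ) + 1) % n = (w.1 : ℕ) ∧ v.2 = 1 ∧ w.2 = 1) ∨
    ((v.1 : ℕ) + 1 = (w.1 : ℕ) ∧ v.2 = 2 ∧ w.2 = 2) ∨
    ((v.1 : ℕ) + 1 = (w.1 : ℕ) ∧ v.2 = 3 ∧ w.2 = 3) ∨
    ((v.1 : ℕ) = n - 1 ∧ (w.1 : ℕ) = 0 ∧ v.2 = 2 ∧ w.2 = 3) ∨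
    ((v.1 : ℕ) = n - 1 ∧ (w.1 : ℕ) = 0 ∧ v.2 = 3 ∧ w.2 = 2))

/-- `S` is a dominating set of `J_n`. -/
def Dominating (n : ℕ) (S : Set (FV n)) : Prop :=
  ∀ v ∉ S, ∃ w ∈ S, (flowerSnark n).Adj v w

/-- `S` is a minimal dominating set of `J_n`. -/
def MinimalDominating (n : ℕ) (S : Set (FV n)) : Prop :=
  Dominating n S ∧ ∀ T : Set (FV n), T ⊂ S → ¬ Dominating n T

/-- `S` is an independent set of `J_n`. -/
def IndependentSet (n : ℕ) (S : Set (FV n)) : Prop :=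
  ∀ v ∈ S, ∀ w ∈ S, ¬ (flowerSnark n).Adj v w

/-- `S` is a 2-dominating set of `J_n`: every vertex outside `S` has at least
two neighbours in `S`. -/
def TwoDominating (n : ℕ) (S : Set (FV n)) : Prop :=
  ∀ v ∉ S, ∃ w₁ ∈ S, ∃ w₂ ∈ S, w₁ ≠ w₂ ∧
    (flowerSnark n).Adj v w₁ ∧ (flowerSnark n).Adj v w₂

/-- `S` is a total dominating set of `J_n`. -/
def TotalDominating (n : ℕ) (S : Set (FV n)) : Prop :=
  ∀ v : FV n, ∃ w ∈ S, (flowerSnark n).Adj v w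

/-- `S` is a connected dominating set of `J_n`. -/
def ConnectedDominating (n : ℕ) (S : Set (FV n)) : Prop :=
  Dominating n S ∧ ((flowerSnark n).induce S).Connected

/-- `S` is a secure dominating set of `J_n`. -/
def SecureDominating (n : ℕ) (S : Set (FV n)) : Prop :=
  Dominating n S ∧ ∀ v ∉ S, ∃ w ∈ S,
    (flowerSnark n).Adj v w ∧ Dominating n (insert v (S \ {w}))

/-- `v` is undefended with respect to `f`: neither `v` nor any of its
neighbours carries a guard. -/
def Undefended (n : ℕ) (f : FV n → ℕ) (v : FV n) : Prop :=
  f v = 0 ∧ ∀ w, (flowerSnark n).Adj v w → f w = 0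

/-- `f` is a weak Roman dominating function on `J_n`: `f` takes values in
`{0,1,2}`, has no undefended vertex, and every vertex `v` with `f v = 0` has a
neighbour `w` with `f w ≥ 1` such that moving one guard from `w` to `v` leaves
no undefended vertex. -/
def WeakRomanDominating (n : ℕ) (f : FV n → ℕ) : Prop :=
  (∀ v, f v ≤ 2) ∧ (∀ v, ¬ Undefended n f v) ∧
  ∀ v, f v = 0 → ∃ w, (flowerSnark n).Adj v w ∧ 1 ≤ f w ∧
    ∀ u, ¬ Undefended n
      (fun x => if x = v then 1 else if x = w then f w - 1 else f x) u

/-- The domination number of `J_n`. -/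
noncomputable def dominationNumber (n : ℕ) : ℕ :=
  sInf {k | ∃ S : Set (FV n), Dominating n S ∧ S.ncard = k}

/-- The independent domination number of `J_n`. -/
noncomputable def indepDominationNumber (n : ℕ) : ℕ :=
  sInf {k | ∃ S : Set (FV n), Dominating n S ∧ IndependentSet n S ∧ S.ncard = k}

/-- The upper domination number of `J_n`: the maximum cardinality of a minimal
dominating set. -/
noncomputable def upperDominationNumber (n : ℕ) : ℕ :=
  sSup {k | ∃ S : Set (FV n), MinimalDominating n S ∧ S.ncard = k}

/-- The 2-domination number of `J_n`. -/
noncomputable def twoDominationNumber (n : ℕ) : ℕ :=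
  sInf {k | ∃ S : Set (FV n), TwoDominating n S ∧ S.ncard = k}

/-- The total domination number of `J_n`. -/
noncomputable def totalDominationNumber (n : ℕ) : ℕ :=
  sInf {k | ∃ S : Set (FV n), TotalDominating n S ∧ S.ncard = k}

/-- The connected domination number of `J_n`. -/
noncomputable def connectedDominationNumber (n : ℕ) : ℕ :=
  sInf {k | ∃ S : Set (FV n), ConnectedDominating n S ∧ S.ncard = k}

/-- The secure domination number of `J_n`. -/
noncomputable def secureDominationNumber (n : ℕ) : ℕ :=
  sInf {k | ∃ S : Set (FV n), SecureDominating n S ∧ S.ncard = k}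

/-- The weak Roman domination number of `J_n`. -/
noncomputable def weakRomanDominationNumber (n : ℕ) : ℕ :=
  sInf {k | ∃ f : FV n → ℕ, WeakRomanDominating n f ∧ ∑ v, f v = k}

/-- The weight of the copy `J^(m mod n)` in a vertex set `S`, i.e. the number
of vertices of `S` among `a, b, c, d` of that copy. -/
noncomputable def copyWeight {n : ℕ} (S : Set (FV n)) (m : ℕ) : ℕ :=
  (S ∩ {v : FV n | (v.1 : ℕ) = m % n}).ncard

/-- The weight of the copy `J^(m mod n)` in a function `f`, i.e.
`f a + f b + f c + f d` over that copy. -/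
def fCopyWeight {n : ℕ} (f : FV n → ℕ) (m : ℕ) : ℕ :=
  ∑ v ∈ Finset.univ.filter (fun v : FV n => (v.1 : ℕ) = m % n), f v

/-!
In a triangle-free graph, security is a local condition on external private neighbours: every vertex
outside `S` must have a neighbour in `S` with no external private neighbour except possibly that
vertex itself. Recording for each vertex whether it is in `S` and whether it has (or is) an external
private neighbour turns secure dominating sets into labellings with a condition on each closed
neighbourhood. Going around `J_n`, such a labelling is a sequence of columns, one for each copy,
whose `n`-th shift exchanges `c` and `d`.

A finite search excludes a few patterns of column weights, so that any four consecutive columns hold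
at least `6` guards; hence `2|S| ≥ 3n`. Equality would force the weights `1, 1, 2, 2` to repeat, and
then the columns to repeat with distinct roles at `c` and `d`, which is incompatible with the twist.
Conversely, four columns of total weight `6` can be inserted into any of a few short words to reach
the bound. The graph `J_3` has the triangle `b^1 b^2 b^3`, and its lower bound is checked directly.
-/

section Graph

variable {V : Type*} {G : SimpleGraph V} {S T : Set V} {u v w : V}

/-- Dominating sets of a graph: every vertex outside `S` has a neighbour in `S`. -/
def IsDominatingSet (G : SimpleGraph V) (S : Set V) : Prop :=
  ∀ v ∉ S, ∃ w ∈ S, G.Adj v w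

/-- Secure dominating sets of a graph: every attacked vertex `v ∉ S` has a neighbouring guard that
can move to `v` without destroying domination. -/
def IsSecureDominatingSet (G : SimpleGraph V) (S : Set V) : Prop :=
  IsDominatingSet G S ∧
    ∀ v ∉ S, ∃ w ∈ S, G.Adj v w ∧ IsDominatingSet G (insert v (S \ {w}))

/-- `u` is an external private neighbour of `w` with respect to `S`: a vertex outside `S` whose only
neighbour in `S` is `w`. -/
def IsExternalPrivateNeighbor (G : SimpleGraph V) (S : Set V) (w u : V) : Prop :=
  u ∉ S ∧ G.neighborSet u ∩ S = {w}

theorem IsDominatingSet.mono (hS : IsDominatingSet G S) (hST : S ⊆ T) : IsDominatingSet G T :=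
  fun v hv => (hS v fun hvS => hv (hST hvS)).imp fun _ hw => ⟨hST hw.1, hw.2⟩

theorem IsSecureDominatingSet.mono (hS : IsSecureDominatingSet G S) (hST : S ⊆ T) :
    IsSecureDominatingSet G T := by
  refine ⟨hS.1.mono hST, fun v hv => ?_⟩
  obtain ⟨w, hw, hvw, hdom⟩ := hS.2 v fun hvS => hv (hST hvS)
  exact ⟨w, hST hw, hvw, hdom.mono (Set.insert_subset_insert (Set.sdiff_subset_sdiff_left hST))⟩

namespace IsExternalPrivateNeighbor

theorem adj (h : IsExternalPrivateNeighbor G S w u) : G.Adj u w :=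
  (h.2 ▸ Set.mem_singleton w : w ∈ G.neighborSet u ∩ S).1

theorem mem (h : IsExternalPrivateNeighbor G S w u) : w ∈ S :=
  (h.2 ▸ Set.mem_singleton w : w ∈ G.neighborSet u ∩ S).2

theorem eq_of_adj (h : IsExternalPrivateNeighbor G S w u) (hv : v ∈ S) (huv : G.Adj u v) : v = w :=
  (h.2 ▸ ⟨huv, hv⟩ : v ∈ ({w} : Set V))

end IsExternalPrivateNeighbor

theorem exists_adj_ne_of_not_isExternalPrivateNeighbor (hv : v ∉ S) (hw : w ∈ S) (hvw : G.Adj v w)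
    (h : ¬ IsExternalPrivateNeighbor G S w v) : ∃ x ∈ S, G.Adj v x ∧ x ≠ w := by
  by_contra! hall
  refine h ⟨hv, Set.Subset.antisymm (fun x hx => hall x hx.2 hx.1) ?_⟩
  rintro x rfl
  exact ⟨hvw, hw⟩

theorem isDominatingSet_insert_diff_iff (hS : IsDominatingSet G S) (hw : w ∈ S) (hvw : G.Adj v w) :
    IsDominatingSet G (insert v (S \ {w})) ↔
      ∀ u, IsExternalPrivateNeighbor G S w u → u = v ∨ G.Adj u v := by
  constructor
  · intro hdom u hu
    by_contra! huv
    obtain ⟨x, rfl | hx, hux⟩ := hdom u (by simp [huv.1, hu.1])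
    · exact huv.2 hux
    · exact hx.2 (hu.eq_of_adj hx.1 hux)
  · intro hepn u hu
    simp only [Set.mem_insert_iff, Set.mem_sdiff, Set.mem_singleton_iff, not_or, not_and,
      not_not] at hu
    by_cases huS : u ∈ S
    · exact ⟨v, Set.mem_insert _ _, hu.2 huS ▸ hvw.symm⟩
    obtain ⟨y, hy, huy⟩ := hS u huS
    by_cases hyw : IsExternalPrivateNeighbor G S w u
    · exact ⟨v, Set.mem_insert _ _, (hepn u hyw).resolve_left hu.1⟩
    obtain ⟨x, hx, hux, hxw⟩ : ∃ x ∈ S, G.Adj u x ∧ x ≠ w := by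
      by_cases hy_eq : y = w
      · exact exists_adj_ne_of_not_isExternalPrivateNeighbor huS hw (hy_eq ▸ huy) hyw
      · exact ⟨y, hy, huy, hy_eq⟩
    exact ⟨x, Or.inr ⟨hx, hxw⟩, hux⟩

theorem IsSecureDominatingSet.exists_forall_eq (hG : G.CliqueFree 3)
    (hS : IsSecureDominatingSet G S) (hv : v ∉ S) :
    ∃ w ∈ S, G.Adj v w ∧ ∀ u, IsExternalPrivateNeighbor G S w u → u = v := by
  classical
  obtain ⟨w, hw, hvw, hdom⟩ := hS.2 v hv
  refine ⟨w, hw, hvw, fun u hu => ?_⟩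
  refine ((isDominatingSet_insert_diff_iff hS.1 hw hvw).1 hdom u hu).resolve_right fun huv => ?_
  exact hG {u, v, w} (SimpleGraph.is3Clique_triple_iff.2 ⟨huv, hu.adj, hvw⟩)

theorem isSecureDominatingSet_of_forall (h : ∀ v ∉ S, ∃ w ∈ S, G.Adj v w ∧
      ∀ u, IsExternalPrivateNeighbor G S w u → u = v) : IsSecureDominatingSet G S := by
  have hdom : IsDominatingSet G S := fun v hv => (h v hv).imp fun _ hw => ⟨hw.1, hw.2.1⟩
  refine ⟨hdom, fun v hv => ?_⟩
  obtain ⟨w, hw, hvw, hepn⟩ := h v hv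
  exact ⟨w, hw, hvw, (isDominatingSet_insert_diff_iff hdom hw hvw).2 fun u hu => Or.inl (hepn u hu)⟩

end Graph

/-- The role of a vertex with respect to a secure dominating set `S` of a triangle-free graph:
a guard without (`free`) or with (`tied`) an external private neighbour, and a vertex outside `S`
that is (`solo`) or is not (`shared`) an external private neighbour of a guard. -/
inductive Role
  | free
  | tied
  | solo
  | shared
  deriving DecidableEq

namespace Role

/-- The guards are the members of the secure dominating set. -/
def isGuard : Role → Bool
  | free | tied => true
  | solo | shared => false

/-- The local condition on the role of a vertex in terms of the roles `N j` of its neighbours. -/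
def Compatible {ι : Type*} (N : ι → Role) : Role → Prop
  | free => ∀ j, N j ≠ solo
  | tied => ∃! j, N j = solo
  | solo => ∃ j, N j = tied ∧ ∀ k, (N k).isGuard → k = j
  | shared => ∃ j k, j ≠ k ∧ N j = free ∧ (N k).isGuard

theorem compatible_comp_equiv {ι κ : Type*} (e : ι ≃ κ) {N : κ → Role} {r : Role} :
    Compatible (N ∘ e) r ↔ Compatible N r := by
  cases r <;>
    simp only [Compatible, ExistsUnique, e.surjective.forall, e.surjective.exists,
      Function.comp_apply, ne_eq, e.apply_eq_iff_eq]

end Role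

section Labelling

open Role

variable {V : Type*} {G : SimpleGraph V} {S : Set V} {f : V → Role}

/-- A labelling of the vertices by roles that satisfies the local condition at every vertex. -/
def IsRoleLabelling (G : SimpleGraph V) (f : V → Role) : Prop :=
  ∀ v, Compatible (fun w : G.neighborSet v => f w) (f v)

theorem compatible_neighborSet_iff {v x y z : V} (hv : G.neighborSet v = {x, y, z}) (hxy : x ≠ y)
    (hxz : x ≠ z) (hyz : y ≠ z) {r : Role} :
    Compatible (fun w : G.neighborSet v => f w) r ↔ Compatible ![f x, f y, f z] r := by
  have hinj : Function.Injective ![x, y, z] := by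
    simp [Function.Injective, Fin.forall_fin_succ, hxy, hxz, hyz, hxy.symm, hxz.symm, hyz.symm]
  have hrange : G.neighborSet v = Set.range ![x, y, z] := by
    simp only [hv, Matrix.range_cons, Matrix.range_empty, Set.union_empty, Set.singleton_union]
  have hcomp : ![f x, f y, f z] = f ∘ ![x, y, z] := by simp [funext_iff, Fin.forall_fin_succ]
  rw [hcomp, hrange]
  exact (compatible_comp_equiv (Equiv.ofInjective _ hinj)).symm

theorem IsRoleLabelling.eq_solo (hf : IsRoleLabelling G f) {u w : V}
    (h : IsExternalPrivateNeighbor G {v | (f v).isGuard} w u) : f u = solo := by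
  have hu := hf u
  have hguard : ¬ (f u).isGuard := h.1
  cases hfu : f u with
  | solo => rfl
  | free => simp [hfu, isGuard] at hguard
  | tied => simp [hfu, isGuard] at hguard
  | shared =>
    rw [hfu] at hu
    obtain ⟨⟨j, huj⟩, ⟨k, huk⟩, hjk, hj, hk⟩ := hu
    have hj' : (f j).isGuard := by rw [show f j = free from hj]; rfl
    exact absurd (Subtype.ext ((h.eq_of_adj hj' huj).trans (h.eq_of_adj hk huk).symm)) hjk

theorem IsRoleLabelling.isSecureDominatingSet (hf : IsRoleLabelling G f) :
    IsSecureDominatingSet G {v | (f v).isGuard} := by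
  refine isSecureDominatingSet_of_forall fun v hv => ?_
  have hguard : ¬ (f v).isGuard := hv
  have hv' := hf v
  cases hfv : f v with
  | free => simp [hfv, isGuard] at hguard
  | tied => simp [hfv, isGuard] at hguard
  | solo =>
    rw [hfv] at hv'
    obtain ⟨⟨w, hvw⟩, hw, -⟩ := hv'
    have hw : f w = tied := hw
    refine ⟨w, by simp [hw, isGuard], hvw, fun u hu => ?_⟩
    have hf_w := hf w
    rw [hw] at hf_w
    exact congrArg Subtype.val (hf_w.unique (y₁ := ⟨u, hu.adj.symm⟩) (y₂ := ⟨v, hvw.symm⟩)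
      (hf.eq_solo hu) hfv)
  | shared =>
    rw [hfv] at hv'
    obtain ⟨⟨w, hvw⟩, -, -, hw, -⟩ := hv'
    have hw : f w = free := hw
    refine ⟨w, by simp [hw, isGuard], hvw, fun u hu => ?_⟩
    have hf_w := hf w
    rw [hw] at hf_w
    exact absurd (hf.eq_solo hu) (hf_w ⟨u, hu.adj.symm⟩)

open Classical in
/-- The role of a vertex with respect to `S`. -/
noncomputable def role (G : SimpleGraph V) (S : Set V) (v : V) : Role :=
  if v ∈ S then
    if ∃ u, IsExternalPrivateNeighbor G S v u then tied else free
  else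
    if ∃ w, IsExternalPrivateNeighbor G S w v then solo else shared

theorem isGuard_role {v : V} : (role G S v).isGuard ↔ v ∈ S := by
  unfold role
  split_ifs <;> simp_all [isGuard]

theorem role_eq_tied_iff {v : V} :
    role G S v = tied ↔ ∃ u, IsExternalPrivateNeighbor G S v u := by
  by_cases hv : v ∈ S
  · simp [role, hv]
  · have hnone : ¬ ∃ u, IsExternalPrivateNeighbor G S v u := fun ⟨_, hu⟩ => hv hu.mem
    simp only [role, hv, hnone, if_false]
    split_ifs <;> simp

theorem role_eq_solo_iff {v : V} :
    role G S v = solo ↔ ∃ w, IsExternalPrivateNeighbor G S w v := by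
  by_cases hv : v ∈ S
  · have hnone : ¬ ∃ w, IsExternalPrivateNeighbor G S w v := fun ⟨_, hw⟩ => hw.1 hv
    simp only [role, hv, hnone, if_true]
    split_ifs <;> simp
  · simp [role, hv]

theorem role_eq_free {v : V} (hv : v ∈ S) (h : ∀ u, ¬ IsExternalPrivateNeighbor G S v u) :
    role G S v = free := by
  simp [role, hv, h]

theorem role_eq_shared {v : V} (hv : v ∉ S) (h : ∀ w, ¬ IsExternalPrivateNeighbor G S w v) :
    role G S v = shared := by
  simp [role, hv, h]

theorem isExternalPrivateNeighbor_of_role_eq_solo {v u : V} (hv : v ∈ S) (huv : G.Adj v u)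
    (hu : role G S u = solo) : IsExternalPrivateNeighbor G S v u := by
  obtain ⟨w, hw⟩ := role_eq_solo_iff.1 hu
  rwa [hw.eq_of_adj hv huv.symm]

theorem isRoleLabelling_role (hG : G.CliqueFree 3) (hS : IsSecureDominatingSet G S) :
    IsRoleLabelling G (role G S) := by
  intro v
  by_cases hv : v ∈ S
  · by_cases hfree : ∀ u, ¬ IsExternalPrivateNeighbor G S v u
    · rw [role_eq_free hv hfree]
      exact fun ⟨u, hvu⟩ hu => hfree u (isExternalPrivateNeighbor_of_role_eq_solo hv hvu hu)
    push Not at hfree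
    obtain ⟨u, hu⟩ := hfree
    obtain ⟨w, hw, huw, honly⟩ := hS.exists_forall_eq hG hu.1
    obtain rfl := hu.eq_of_adj hw huw
    rw [role_eq_tied_iff.2 ⟨u, hu⟩]
    exact ⟨⟨u, huw.symm⟩, role_eq_solo_iff.2 ⟨w, hu⟩, fun ⟨x, hwx⟩ hx =>
      Subtype.ext (honly x (isExternalPrivateNeighbor_of_role_eq_solo hw hwx hx))⟩
  · by_cases hshared : ∀ w, ¬ IsExternalPrivateNeighbor G S w v
    · obtain ⟨w, hw, hvw, honly⟩ := hS.exists_forall_eq hG hv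
      obtain ⟨x, hx, hvx, hxw⟩ :=
        exists_adj_ne_of_not_isExternalPrivateNeighbor hv hw hvw (hshared w)
      have hw_free : role G S w = free :=
        role_eq_free hw fun u hu => hshared w (honly u hu ▸ hu)
      rw [role_eq_shared hv hshared]
      exact ⟨⟨w, hvw⟩, ⟨x, hvx⟩, fun h => hxw (congrArg Subtype.val h).symm, hw_free,
        isGuard_role.2 hx⟩
    push Not at hshared
    obtain ⟨w, hw⟩ := hshared
    rw [role_eq_solo_iff.2 ⟨w, hw⟩]
    exact ⟨⟨w, hw.adj⟩, role_eq_tied_iff.2 ⟨v, hw⟩, fun ⟨x, hvx⟩ hx =>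
      Subtype.ext (hw.eq_of_adj (isGuard_role.1 hx) hvx)⟩

end Labelling

namespace Role

/-- The number of true values of `p` among three roles. -/
def tally (p : Role → Bool) (x y z : Role) : ℕ :=
  (p x).toNat + (p y).toNat + (p z).toNat

/-- Evaluates `Compatible ![x, y, z]` by counting. -/
def compatible₃ (x y z : Role) : Role → Bool
  | free => tally (· matches solo) x y z == 0
  | tied => tally (· matches solo) x y z == 1
  | solo => tally isGuard x y z == 1 && tally (· matches tied) x y z == 1
  | shared => 2 ≤ tally isGuard x y z && 1 ≤ tally (· matches free) x y z

/-- Evaluates `Compatible ![x, y, z]` when one of the three roles is arbitrary. -/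
def compatible₂ (x y : Role) : Role → Bool
  | free => !(x matches solo) && !(y matches solo)
  | tied => !(x matches solo) || !(y matches solo)
  | solo => !(x matches free) && !(y matches free) && !(x.isGuard && y.isGuard)
  | shared => x.isGuard || y.isGuard

theorem compatible_vec_iff {x y z r : Role} : Compatible ![x, y, z] r ↔ compatible₃ x y z r := by
  cases r <;> cases x <;> cases y <;> cases z <;>
    simp [Compatible, ExistsUnique, compatible₃, tally, isGuard, Fin.exists_fin_succ,
      Fin.forall_fin_succ]

theorem forall_role {p : Role → Prop} : (∀ r, p r) ↔ p free ∧ p tied ∧ p solo ∧ p shared :=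
  ⟨fun h => ⟨h _, h _, h _, h _⟩, fun ⟨h₁, h₂, h₃, h₄⟩ r => by cases r <;> assumption⟩

theorem exists_role {p : Role → Prop} : (∃ r, p r) ↔ p free ∨ p tied ∨ p solo ∨ p shared := by
  simpa only [not_forall, not_not, not_and_or] using not_congr (forall_role (p := fun r => ¬ p r))

theorem exists_compatible_vec_right_iff {x y r : Role} :
    (∃ z, Compatible ![x, y, z] r) ↔ compatible₂ x y r := by
  simp only [compatible_vec_iff, exists_role]
  cases r <;> cases x <;> cases y <;> decide

theorem exists_compatible_vec_mid_iff {x y r : Role} :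
    (∃ z, Compatible ![x, z, y] r) ↔ compatible₂ x y r := by
  simp only [compatible_vec_iff, exists_role]
  cases r <;> cases x <;> cases y <;> decide

instance (x y z r : Role) : Decidable (Compatible ![x, y, z] r) :=
  decidable_of_iff _ compatible_vec_iff.symm

instance (x y r : Role) : Decidable (∃ z, Compatible ![x, y, z] r) :=
  decidable_of_iff _ exists_compatible_vec_right_iff.symm

instance (x y r : Role) : Decidable (∃ z, Compatible ![x, z, y] r) :=
  decidable_of_iff _ exists_compatible_vec_mid_iff.symm

end Role

open Role

/-- The roles of the four vertices `a, b, c, d` of one copy. -/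
abbrev Column := Fin 4 → Role

namespace Column

/-- The number of guards of a column. -/
def weight (x : Column) : ℕ :=
  (x 0).isGuard.toNat + (x 1).isGuard.toNat + (x 2).isGuard.toNat + (x 3).isGuard.toNat

/-- The column with the roles of `c` and `d` exchanged. -/
def twist (x : Column) : Column := x ∘ Equiv.swap 2 3

/-- The local condition at the vertex `a` of a column. -/
def HubCompatible (x : Column) : Prop := Compatible ![x 1, x 2, x 3] (x 0)

/-- The local conditions at `b, c, d` in a column `x` between the columns `l` and `r`. -/
def Fits (l x r : Column) : Prop := ∀ k ≠ 0, Compatible ![x 0, l k, r k] (x k)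

/-- Two consecutive columns admit, at each of their vertices `b, c, d`, some role of the neighbour
outside these columns. -/
def Joins (x y : Column) : Prop :=
  ∀ k ≠ 0, (∃ r, Compatible ![x 0, r, y k] (x k)) ∧ ∃ r, Compatible ![y 0, x k, r] (y k)

/-- `x` can be followed by the list of columns `t`. -/
def Extends (x : Column) : List Column → Prop
  | [] => True
  | [y] => Joins x y
  | y :: z :: _ => Joins x y ∧ Fits x y z

/-- A finite sequence of columns satisfying all local conditions that do not involve vertices
outside of it; the conditions at `b, c, d` of its two end columns are weakened by `Joins`. -/
def IsFiniteStrip : List Column → Prop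
  | [] => True
  | x :: t => HubCompatible x ∧ Extends x t ∧ IsFiniteStrip t

/-- An infinite sequence of columns satisfying all local conditions except those at `b, c, d` of its
first column. -/
def IsStrip (x : ℕ → Column) : Prop :=
  ∀ i, HubCompatible (x i) ∧ Fits (x i) (x (i + 1)) (x (i + 2))

instance decidableForallNeZero (p : Fin 4 → Prop) [DecidablePred p] : Decidable (∀ k ≠ 0, p k) :=
  decidable_of_iff (p 1 ∧ p 2 ∧ p 3) (by simp [Fin.forall_fin_succ])

instance : DecidablePred HubCompatible := fun x =>
  inferInstanceAs (Decidable (Compatible ![x 1, x 2, x 3] (x 0)))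

instance (l x r : Column) : Decidable (Fits l x r) := decidableForallNeZero _

instance (x y : Column) : Decidable (Joins x y) := decidableForallNeZero _

instance (x : Column) : DecidablePred (Extends x)
  | [] => inferInstanceAs (Decidable True)
  | [y] => inferInstanceAs (Decidable (Joins x y))
  | y :: z :: _ => inferInstanceAs (Decidable (Joins x y ∧ Fits x y z))

instance decidableIsFiniteStrip : DecidablePred IsFiniteStrip
  | [] => inferInstanceAs (Decidable True)
  | x :: t =>
    have := decidableIsFiniteStrip t
    inferInstanceAs (Decidable (HubCompatible x ∧ Extends x t ∧ IsFiniteStrip t))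

theorem IsStrip.joins {x : ℕ → Column} (hx : IsStrip x) (i : ℕ) :
    Joins (x (i + 1)) (x (i + 2)) :=
  fun k hk => ⟨⟨_, (hx i).2 k hk⟩, ⟨_, (hx (i + 1)).2 k hk⟩⟩

theorem IsStrip.isFiniteStrip {x : ℕ → Column} (hx : IsStrip x) (i m : ℕ) :
    IsFiniteStrip ((List.range' (i + 1) m).map x) := by
  induction m generalizing i with
  | zero => trivial
  | succ m ih =>
    refine ⟨(hx (i + 1)).1, ?_, ih (i + 1)⟩
    match m with
    | 0 => trivial
    | 1 => exact hx.joins i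
    | _ + 2 => exact ⟨hx.joins i, (hx (i + 1)).2⟩

/-- All columns. -/
def all : List Column :=
  let roles := [free, tied, solo, shared]
  roles.flatMap fun p => roles.flatMap fun q => roles.flatMap fun r => roles.map fun s =>
    ![p, q, r, s]

/-- The columns of weight `w` that satisfy the local condition at `a`. -/
def ofWeight (w : ℕ) : List Column := all.filter fun x => HubCompatible x ∧ weight x = w

/-- The finite strips whose columns have the given weights. -/
def strips : List ℕ → List (List Column)
  | [] => [[]]
  | w :: ws => (strips ws).flatMap fun t => ((ofWeight w).filter (Extends · t)).map (· :: t)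

theorem mem_all (x : Column) : x ∈ all := by
  have hroles : ∀ r : Role, r ∈ [free, tied, solo, shared] := fun r => by cases r <;> simp
  simp only [all, List.mem_flatMap, List.mem_map]
  exact ⟨x 0, hroles _, x 1, hroles _, x 2, hroles _, x 3, hroles _,
    funext (by simp [Fin.forall_fin_succ])⟩

theorem IsFiniteStrip.mem_strips {t : List Column} (ht : IsFiniteStrip t) :
    t ∈ strips (t.map weight) := by
  induction t with
  | nil => simp [strips]
  | cons x t ih =>
    simp only [strips, List.map_cons, List.mem_flatMap, List.mem_map, List.mem_filter, ofWeight,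
      decide_eq_true_eq]
    exact ⟨t, ih ht.2.2, x, ⟨⟨mem_all x, ht.1, rfl⟩, ht.2.1⟩, rfl⟩

theorem strips_zero : strips [0] = [] := by decide +kernel

theorem strips_one_one_one : strips [1, 1, 1] = [] := by decide +kernel

theorem strips_one_one_two_one : strips [1, 1, 2, 1] = [] := by decide +kernel

theorem strips_one_two_one_one : strips [1, 2, 1, 1] = [] := by decide +kernel

theorem strips_one_two_one_two_one_two_one : strips [1, 2, 1, 2, 1, 2, 1] = [] := by
  decide +kernel

theorem strips_one_one_two_two_one_one_two :
    ∀ t ∈ strips [1, 1, 2, 2, 1, 1, 2], t[4]? = t[0]? ∧ ∀ x ∈ t[0]?, x 2 ≠ x 3 := by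
  decide +kernel

end Column

section Weights

open Finset Function

variable {V : ℕ → ℕ} {n : ℕ}

theorem sum_range_add_of_periodic {M : Type*} [AddCancelCommMonoid M] {V : ℕ → M}
    (hV : Periodic V n) (j : ℕ) :
    ∑ i ∈ range n, V (i + j) = ∑ i ∈ range n, V i := by
  induction j with
  | zero => rfl
  | succ j ih =>
    have h := (sum_range_succ (fun i => V (i + j)) n).symm.trans (sum_range_succ' _ n)
    rw [← ih]
    simp only [zero_add, add_comm n j, hV j] at h
    simpa only [add_assoc, add_comm 1 j] using (add_right_cancel h).symm

/-- The sum of four consecutive weights. -/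
def windowSum (V : ℕ → ℕ) (i : ℕ) : ℕ := V i + V (i + 1) + V (i + 2) + V (i + 3)

/-- Sequences of weights avoiding the patterns excluded in secure dominating sets of flower
snarks. -/
structure IsAdmissible (V : ℕ → ℕ) : Prop where
  ne_zero (i : ℕ) : V i ≠ 0
  not_one_one_one (i : ℕ) : ¬ (V i = 1 ∧ V (i + 1) = 1 ∧ V (i + 2) = 1)
  not_one_one_two_one (i : ℕ) : ¬ (V i = 1 ∧ V (i + 1) = 1 ∧ V (i + 2) = 2 ∧ V (i + 3) = 1)
  not_one_two_one_one (i : ℕ) : ¬ (V i = 1 ∧ V (i + 1) = 2 ∧ V (i + 2) = 1 ∧ V (i + 3) = 1)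
  not_one_two_one_two_one_two_one (i : ℕ) :
    ¬ (V i = 1 ∧ V (i + 1) = 2 ∧ V (i + 2) = 1 ∧ V (i + 3) = 2 ∧ V (i + 4) = 1 ∧
      V (i + 5) = 2 ∧ V (i + 6) = 1)

theorem sum_windowSum (hV : Periodic V n) :
    ∑ i ∈ range n, windowSum V i = 4 * ∑ i ∈ range n, V i := by
  simp only [windowSum, sum_add_distrib, sum_range_add_of_periodic hV]
  ring

namespace IsAdmissible

theorem six_le_windowSum (hV : IsAdmissible V) (i : ℕ) : 6 ≤ windowSum V i := by
  have h₁ := hV.not_one_one_one i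
  have h₂ := hV.not_one_one_one (i + 1)
  have h₃ := hV.not_one_one_two_one i
  have h₄ := hV.not_one_two_one_one i
  have := hV.ne_zero i
  have := hV.ne_zero (i + 1)
  have := hV.ne_zero (i + 2)
  have := hV.ne_zero (i + 3)
  simp only [add_assoc, Nat.reduceAdd] at *
  unfold windowSum
  omega

theorem three_mul_le (hV : IsAdmissible V) (hper : Periodic V n) :
    3 * n ≤ 2 * ∑ i ∈ range n, V i := by
  have h := card_nsmul_le_sum (range n) _ 6 fun i _ => hV.six_le_windowSum i
  rw [sum_windowSum hper, card_range, smul_eq_mul] at h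
  omega

theorem windowSum_eq_six (hV : IsAdmissible V) (hper : Periodic V n) (hn : 0 < n)
    (hsum : 2 * ∑ i ∈ range n, V i = 3 * n) (i : ℕ) : windowSum V i = 6 := by
  have hperW : Periodic (windowSum V) n := fun i => by
    simp only [windowSum, add_right_comm i n, hper _]
  have hsumW : ∑ i ∈ range n, 6 = ∑ i ∈ range n, windowSum V i := by
    rw [sum_windowSum hper, sum_const, card_range, smul_eq_mul]
    omega
  have h := (sum_eq_sum_iff_of_le fun i _ => hV.six_le_windowSum i).1 hsumW
  rw [← hperW.map_mod_nat i]
  exact (h _ (mem_range.2 (Nat.mod_lt i hn))).symm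

theorem periodic_four (h : ∀ i, windowSum V i = 6) : Periodic V 4 := fun i => by
  have h₀ := h i
  have h₁ := h (i + 1)
  simp only [windowSum, add_assoc, Nat.reduceAdd] at h₀ h₁
  omega

theorem exists_one_one_two_two (hV : IsAdmissible V) (h : ∀ i, windowSum V i = 6) :
    ∃ i, V i = 1 ∧ V (i + 1) = 1 ∧ V (i + 2) = 2 ∧ V (i + 3) = 2 := by
  by_contra! hnone
  have hper := periodic_four h
  have hne := hV.ne_zero
  have hpair (i : ℕ) : 3 ≤ V i + V (i + 1) := by
    by_contra! hlt
    have hi : V i = 1 ∧ V (i + 1) = 1 := by have := hne i; have := hne (i + 1); omega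
    have h₂ : V (i + 2) ≠ 1 := fun h₂ => hV.not_one_one_one i ⟨hi.1, hi.2, h₂⟩
    have h₃ : V (i + 3) ≠ 1 := fun h₃ =>
      hV.not_one_one_one (i + 3) ⟨h₃, (hper i).trans hi.1, (hper (i + 1)).trans hi.2⟩
    have := hne (i + 2); have := hne (i + 3); have := hnone i hi.1 hi.2
    have hsix : V i + V (i + 1) + V (i + 2) + V (i + 3) = 6 := h i
    omega
  have hthree (i : ℕ) : V i + V (i + 1) = 3 := by
    have hsix : V i + V (i + 1) + V (i + 2) + V (i + 3) = 6 := h i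
    have := hpair i; have := hpair (i + 2)
    simp only [add_assoc, Nat.reduceAdd] at *
    omega
  have halt (i : ℕ) : V i ≠ 1 := fun hi =>
    hV.not_one_two_one_two_one_two_one i <| by
      have := hthree i; have := hthree (i + 1); have := hthree (i + 2)
      have := hthree (i + 3); have := hthree (i + 4); have := hthree (i + 5)
      simp only [add_assoc, Nat.reduceAdd] at *
      omega
  have := halt 0; have := halt 1; have := hne 0; have := hne 1; have := hthree 0
  simp only [Nat.reduceAdd] at *
  omega

end IsAdmissible

end Weights

namespace Column

theorem weight_twist (x : Column) : x.twist.weight = x.weight := by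
  simp only [weight, twist, Function.comp_apply,
    show Equiv.swap (2 : Fin 4) 3 0 = 0 by decide, show Equiv.swap (2 : Fin 4) 3 1 = 1 by decide,
    Equiv.swap_apply_left, Equiv.swap_apply_right]
  ring

namespace IsStrip

variable {x : ℕ → Column} {n : ℕ}

theorem map_weight_ne (hx : IsStrip x) {ws : List ℕ} (hws : strips ws = []) (i : ℕ) :
    (List.range' (i + 1) ws.length).map (weight ∘ x) ≠ ws := by
  intro h
  have hmem := (hx.isFiniteStrip i ws.length).mem_strips
  rw [List.map_map, h, hws] at hmem
  exact List.not_mem_nil hmem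

theorem isAdmissible (hx : IsStrip x) : IsAdmissible fun i => weight (x (i + 1)) where
  ne_zero i h := hx.map_weight_ne strips_zero i (by simp [h])
  not_one_one_one i h := hx.map_weight_ne strips_one_one_one i (by simp [h, List.range'])
  not_one_one_two_one i h := hx.map_weight_ne strips_one_one_two_one i (by simp [h, List.range'])
  not_one_two_one_one i h := hx.map_weight_ne strips_one_two_one_one i (by simp [h, List.range'])
  not_one_two_one_two_one_two_one i h :=
    hx.map_weight_ne strips_one_two_one_two_one_two_one i (by simp [h, List.range'])

theorem add_four_eq (hx : IsStrip x) (hper : Function.Periodic (fun i => weight (x (i + 1))) 4)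
    {i : ℕ} (h₀ : weight (x (i + 1)) = 1) (h₁ : weight (x (i + 2)) = 1)
    (h₂ : weight (x (i + 3)) = 2) (h₃ : weight (x (i + 4)) = 2) :
    x (i + 5) = x (i + 1) ∧ x (i + 1) 2 ≠ x (i + 1) 3 := by
  have h₄ : weight (x (i + 5)) = 1 := (hper i).trans h₀
  have h₅ : weight (x (i + 6)) = 1 := (hper (i + 1)).trans h₁
  have h₆ : weight (x (i + 7)) = 2 := (hper (i + 2)).trans h₂
  have hmem := (hx.isFiniteStrip i 7).mem_strips
  rw [show ((List.range' (i + 1) 7).map x).map weight = [1, 1, 2, 2, 1, 1, 2] by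
    simp [List.range', h₀, h₁, h₂, h₃, h₄, h₅, h₆]] at hmem
  simpa [List.range'] using strips_one_one_two_two_one_one_two _ hmem

theorem three_mul_lt (hx : IsStrip x) (hn : 0 < n) (htwist : ∀ i, x (i + n) = (x i).twist) :
    3 * n < 2 * ∑ i ∈ Finset.range n, weight (x i) := by
  have hper : Function.Periodic (fun i => weight (x i)) n := fun i => by
    simp only [htwist, weight_twist]
  have hper' : Function.Periodic (fun i => weight (x (i + 1))) n := fun i => by
    simpa only [add_right_comm] using hper (i + 1)
  rw [← sum_range_add_of_periodic hper 1]
  refine (hx.isAdmissible.three_mul_le hper').lt_of_ne fun hsum => ?_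
  have hsix := hx.isAdmissible.windowSum_eq_six hper' hn hsum.symm
  have hper₄ := IsAdmissible.periodic_four hsix
  obtain ⟨i, h₀, h₁, h₂, h₃⟩ := hx.isAdmissible.exists_one_one_two_two hsix
  have hstep (j : ℕ) : x (i + j * 4 + 5) = x (i + j * 4 + 1) := by
    have hshift (l : ℕ) : weight (x (i + j * 4 + l + 1)) = weight (x (i + l + 1)) :=
      (congrArg (weight ∘ x) (by simp only [Nat.cast_id]; ring)).trans (hper₄.nat_mul j (i + l))
    exact (hx.add_four_eq hper₄ ((hshift 0).trans h₀) ((hshift 1).trans h₁)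
      ((hshift 2).trans h₂) ((hshift 3).trans h₃)).1
  have hfix (j : ℕ) : x (i + j * 4 + 1) = x (i + 1) := by
    induction j with
    | zero => simp
    | succ j ih => rw [← ih, ← hstep j, Nat.succ_mul]; rfl
  obtain ⟨m, rfl | rfl⟩ : ∃ m, n = m * 4 ∨ n = m * 4 + 2 := ⟨n / 4, by omega⟩
  · have htw : x (i + 1) = (x (i + 1)).twist := by
      rw [← htwist, ← hfix m, add_right_comm]
    exact (hx.add_four_eq hper₄ h₀ h₁ h₂ h₃).2 (congrFun htw 2)
  · have hindex : x (i + 2 + (m : ℕ) * 4 + 1) = x (i + (m * 4 + 2) + 1) :=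
      congrArg x (by ring)
    have hclash : weight (x (i + 3)) = weight (x (i + 1)) :=
      ((hper₄.nat_mul m (i + 2)).symm.trans (congrArg weight hindex)).trans (hper' i)
    simp [h₀, h₂] at hclash

end IsStrip

end Column

namespace FlowerSnark

open Equiv (swap)

theorem succ_mod_eq_iff {n : ℕ} {i j : Fin n} :
    ((i : ℕ) + 1) % n = j ↔ (i : ℕ) + 1 = j ∨ (i : ℕ) + 1 = n ∧ (j : ℕ) = 0 := by
  obtain h | h := (show (i : ℕ) + 1 ≤ n from i.isLt).lt_or_eq
  · rw [Nat.mod_eq_of_lt h]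
    omega
  · rw [h, Nat.mod_self]
    omega

variable {n : ℕ} [NeZero n] {v w : FV n}

/-- The map moving each vertex to the next copy of `J_n` along the cycles of the vertices of type
`b, c, d`; passing from the last to the first copy exchanges `c` and `d`. -/
def rotate (v : FV n) : FV n :=
  (v.1 + 1, if v.1 + 1 = 0 then swap 2 3 v.2 else v.2)

theorem rotate_injective : Function.Injective (rotate (n := n)) := by
  rintro ⟨i, k⟩ ⟨j, l⟩ h
  simp only [rotate, Prod.mk.injEq, add_left_inj] at h
  obtain ⟨rfl, hkl⟩ := h
  split_ifs at hkl
  · exact Prod.ext rfl ((swap 2 3).injective hkl)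
  · exact Prod.ext rfl hkl

theorem eq_rotate_iff : w = rotate v ↔ ((v.1 : ℕ) + 1 = w.1 ∧ w.2 = v.2) ∨
    ((v.1 : ℕ) + 1 = n ∧ (w.1 : ℕ) = 0 ∧ w.2 = swap 2 3 v.2) := by
  have hsucc (j : Fin n) : v.1 + 1 = j ↔ (v.1 : ℕ) + 1 = j ∨ (v.1 : ℕ) + 1 = n ∧ (j : ℕ) = 0 := by
    rw [Fin.ext_iff, Fin.val_add, Fin.val_one', Nat.add_mod_mod, succ_mod_eq_iff]
  rw [Prod.ext_iff, rotate, eq_comm, hsucc]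
  have hwrap : v.1 + 1 = 0 ↔ (v.1 : ℕ) + 1 = n := by simp [hsucc]
  simp only [hwrap]
  split_ifs with h
  · have : (v.1 : ℕ) + 1 ≠ w.1 := by omega
    tauto
  · tauto

theorem swap_two_three_eq_zero_iff : ∀ {k : Fin 4}, swap 2 3 k = 0 ↔ k = 0 := by decide

theorem rotate_snd_eq_zero_iff : (rotate v).2 = 0 ↔ v.2 = 0 := by
  unfold rotate
  dsimp only
  split_ifs
  · exact swap_two_three_eq_zero_iff
  · rfl

theorem rotate_ne_self (hn : 2 ≤ n) : rotate v ≠ v := by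
  intro h
  rw [eq_comm, eq_rotate_iff] at h
  omega

theorem adj_iff (hn : 2 ≤ n) : (flowerSnark n).Adj v w ↔
    v.1 = w.1 ∧ (v.2 = 0 ↔ w.2 ≠ 0) ∨ v.2 ≠ 0 ∧ (w = rotate v ∨ v = rotate w) := by
  have hcycle (v w : FV n) : (((v.1 : ℕ) + 1) % n = (w.1 : ℕ) ∧ v.2 = 1 ∧ w.2 = 1) ∨
      ((v.1 : ℕ) + 1 = (w.1 : ℕ) ∧ v.2 = 2 ∧ w.2 = 2) ∨
      ((v.1 : ℕ) + 1 = (w.1 : ℕ) ∧ v.2 = 3 ∧ w.2 = 3) ∨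
      ((v.1 : ℕ) = n - 1 ∧ (w.1 : ℕ) = 0 ∧ v.2 = 2 ∧ w.2 = 3) ∨
      ((v.1 : ℕ) = n - 1 ∧ (w.1 : ℕ) = 0 ∧ v.2 = 3 ∧ w.2 = 2) ↔ v.2 ≠ 0 ∧ w = rotate v := by
    have hlast : (v.1 : ℕ) = n - 1 ↔ (v.1 : ℕ) + 1 = n := by omega
    rw [succ_mod_eq_iff, hlast, eq_rotate_iff]
    generalize v.2 = k, w.2 = l
    fin_cases k <;> fin_cases l <;> simp [Equiv.swap_apply_def]
  rw [flowerSnark, SimpleGraph.fromRel_adj, hcycle, hcycle]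
  constructor
  · rintro ⟨-, (⟨h, hv, hw⟩ | h) | ⟨h, hw, hv⟩ | ⟨hw, rfl⟩⟩
    · exact Or.inl ⟨h, by simp [hv, hw]⟩
    · exact Or.inr ⟨h.1, Or.inl h.2⟩
    · exact Or.inl ⟨h.symm, by simp [hv, hw]⟩
    · exact Or.inr ⟨rotate_snd_eq_zero_iff.not.2 hw, Or.inr rfl⟩
  · rintro (⟨h, hvw⟩ | ⟨hv, rfl | rfl⟩)
    · refine ⟨fun heq => by simp [heq] at hvw, ?_⟩
      by_cases hv : v.2 = 0
      · exact Or.inl (Or.inl ⟨h, hv, hvw.1 hv⟩)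
      · exact Or.inr (Or.inl ⟨h.symm, not_not.1 (hvw.not.1 hv), hv⟩)
    · exact ⟨(rotate_ne_self hn).symm, Or.inl (Or.inr ⟨hv, rfl⟩)⟩
    · exact ⟨rotate_ne_self hn, Or.inr (Or.inr ⟨rotate_snd_eq_zero_iff.not.1 hv, rfl⟩)⟩

theorem cliqueFree_three {n : ℕ} (hn : 4 ≤ n) : (flowerSnark n).CliqueFree 3 := by
  have : NeZero n := ⟨by omega⟩
  intro s hs
  obtain ⟨u, v, w, huv, huw, hvw, -⟩ := SimpleGraph.is3Clique_iff.1 hs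
  have hadj {v w : FV n} (h : (flowerSnark n).Adj v w) :
      (v.1 : ℕ) = w.1 ∧ (v.2 = 0 ↔ w.2 ≠ 0) ∨ v.2 ≠ 0 ∧ w.2 ≠ 0 ∧
        ((v.1 : ℕ) + 1 = w.1 ∨ (v.1 : ℕ) + 1 = n ∧ (w.1 : ℕ) = 0 ∨
          (w.1 : ℕ) + 1 = v.1 ∨ (w.1 : ℕ) + 1 = n ∧ (v.1 : ℕ) = 0) := by
    rw [adj_iff (by omega), eq_rotate_iff, eq_rotate_iff, Fin.ext_iff] at h
    have hzero := @swap_two_three_eq_zero_iff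
    grind
  have := hadj huv
  have := hadj huw
  have := hadj hvw
  omega

/-- The vertex of type `k` (before any twist) in the `i`-th copy met when going around `J_n`
repeatedly, so that `site n i k` moves along the cycles of `J_n` as `i` grows. -/
def site (n : ℕ) [NeZero n] (i : ℕ) (k : Fin 4) : FV n :=
  (Fin.ofNat n i, (swap 2 3)^[i / n] k)

theorem rotate_site (i : ℕ) (k : Fin 4) : rotate (site n i k) = site n (i + 1) k := by
  obtain h | ⟨hlast, hzero⟩ := succ_mod_eq_iff (i := Fin.ofNat n i) (j := Fin.ofNat n (i + 1)).1
    (Nat.mod_add_mod i n 1)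
  · have hdvd : ¬ n ∣ i + 1 := fun hdvd => by
      rw [Fin.val_ofNat, Fin.val_ofNat, Nat.mod_eq_zero_of_dvd hdvd] at h
      omega
    exact (eq_rotate_iff.2 (Or.inl ⟨h, by simp [site, Nat.succ_div, hdvd]⟩)).symm
  · have hdvd : n ∣ i + 1 := Nat.dvd_of_mod_eq_zero hzero
    refine (eq_rotate_iff.2 (Or.inr ⟨hlast, hzero, ?_⟩)).symm
    simp only [site, Nat.succ_div, hdvd, if_true, Function.iterate_succ_apply']

theorem site_add (i : ℕ) (k : Fin 4) : site n (i + n) k = site n i (swap 2 3 k) := by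
  refine Prod.ext (Fin.ext (Nat.add_mod_right i n)) ?_
  simp only [site, Nat.add_div_right _ (NeZero.pos n), Function.iterate_succ_apply]

theorem site_val (i : Fin n) (k : Fin 4) : site n i k = (i, k) := by
  simp [site, Nat.div_eq_of_lt i.isLt]

theorem site_snd_eq_zero_iff {i : ℕ} {k : Fin 4} : (site n i k).2 = 0 ↔ k = 0 := by
  have hinj := (swap (2 : Fin 4) 3).injective.iterate (i / n)
  exact ⟨fun h => hinj (h.trans (Function.iterate_fixed (by decide) _).symm), fun h => by
    rw [h]; exact Function.iterate_fixed (by decide) _⟩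

theorem site_injective (i : ℕ) : Function.Injective (site n i) := fun _ _ h =>
  (swap (2 : Fin 4) 3).injective.iterate (i / n) (Prod.ext_iff.1 h).2

theorem exists_site_eq {i : ℕ} (h : v.1 = Fin.ofNat n i) : ∃ k, site n i k = v := by
  obtain ⟨k, hk⟩ := (swap (2 : Fin 4) 3).surjective.iterate (i / n) v.2
  exact ⟨k, Prod.ext h.symm hk⟩

theorem neighborSet_site_zero (hn : 2 ≤ n) (i : ℕ) :
    (flowerSnark n).neighborSet (site n i 0) = {site n i 1, site n i 2, site n i 3} := by
  ext w
  have hadj : (flowerSnark n).Adj (site n i 0) w ↔ ∃ k ≠ 0, site n i k = w := by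
    simp only [adj_iff hn, site_snd_eq_zero_iff, ne_eq, not_true_eq_false, false_and, or_false,
      true_iff]
    constructor
    · rintro ⟨hcopy, hw⟩
      obtain ⟨k, rfl⟩ := exists_site_eq hcopy.symm
      exact ⟨k, site_snd_eq_zero_iff.not.1 hw, rfl⟩
    · rintro ⟨k, hk, rfl⟩
      exact ⟨rfl, site_snd_eq_zero_iff.not.2 hk⟩
  simp [hadj, Fin.exists_fin_succ, eq_comm]

theorem neighborSet_site_succ (hn : 2 ≤ n) (i : ℕ) {k : Fin 4} (hk : k ≠ 0) :
    (flowerSnark n).neighborSet (site n (i + 1) k) =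
      {site n (i + 1) 0, site n i k, site n (i + 2) k} := by
  ext w
  have hadj : (flowerSnark n).Adj (site n (i + 1) k) w ↔
      site n (i + 1) 0 = w ∨ site n i k = w ∨ site n (i + 2) k = w := by
    simp only [adj_iff hn, site_snd_eq_zero_iff, hk, ne_eq, false_iff, not_not, not_false_eq_true,
      true_and, rotate_site]
    rw [← rotate_site i k, rotate_injective.eq_iff, or_comm (a := w = _), @eq_comm _ w]
    refine or_congr_left ⟨?_, ?_⟩
    · rintro ⟨hcopy, hw⟩
      obtain ⟨l, rfl⟩ := exists_site_eq (i := i + 1) (hcopy.symm.trans (by rw [rotate_site]; rfl))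
      rw [site_snd_eq_zero_iff.1 hw]
    · rintro rfl
      exact ⟨by rw [rotate_site]; rfl, site_snd_eq_zero_iff.2 rfl⟩
  simp [hadj, eq_comm]

theorem site_ne_site_add_two (hn : 3 ≤ n) (i : ℕ) (k : Fin 4) : site n i k ≠ site n (i + 2) k := by
  intro h
  have hmod : i % n = (i + 2) % n := congrArg (fun v : FV n => (v.1 : ℕ)) h
  have hdvd : n ∣ 2 := by simpa using (Nat.modEq_iff_dvd' (by omega)).1 hmod
  exact absurd (Nat.le_of_dvd two_pos hdvd) (by omega)

/-- The roles assigned by `f` to the `i`-th copy met when going around `J_n`, where `c` and `d` are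
exchanged after each turn. -/
def column (f : FV n → Role) (i : ℕ) : Column := f ∘ site n i

theorem column_add (f : FV n → Role) (i : ℕ) : column f (i + n) = (column f i).twist :=
  funext fun k => congrArg f (site_add i k)

theorem isRoleLabelling_iff_isStrip_column (hn : 3 ≤ n) {f : FV n → Role} :
    IsRoleLabelling (flowerSnark n) f ↔ Column.IsStrip (column f) := by
  have hhub (i : ℕ) : Compatible (fun w : (flowerSnark n).neighborSet (site n i 0) => f w)
      (f (site n i 0)) ↔ Column.HubCompatible (column f i) :=
    compatible_neighborSet_iff (neighborSet_site_zero (by omega) i)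
      ((site_injective i).ne (by decide)) ((site_injective i).ne (by decide))
      ((site_injective i).ne (by decide))
  have hfit (i : ℕ) {k : Fin 4} (hk : k ≠ 0) :
      Compatible (fun w : (flowerSnark n).neighborSet (site n (i + 1) k) => f w)
        (f (site n (i + 1) k)) ↔
      Compatible ![column f (i + 1) 0, column f i k, column f (i + 2) k] (column f (i + 1) k) := by
    have hne (j : ℕ) : site n (i + 1) 0 ≠ site n j k := fun h =>
      hk (site_snd_eq_zero_iff.1 (h ▸ site_snd_eq_zero_iff.2 rfl))
    exact compatible_neighborSet_iff (neighborSet_site_succ (by omega) i hk) (hne _) (hne _)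
      (site_ne_site_add_two hn i k)
  constructor
  · exact fun hf i => ⟨(hhub i).1 (hf _), fun k hk => (hfit i hk).1 (hf _)⟩
  · rintro hx ⟨i, k⟩
    obtain ⟨l, hl⟩ := exists_site_eq (v := (i, k)) (i := i + (n - 1) + 1) (by
      rw [add_assoc, Nat.sub_add_cancel (by omega)]; ext; simp [Nat.mod_eq_of_lt i.isLt])
    rw [← hl]
    by_cases hl₀ : l = 0
    · rw [hl₀]
      exact (hhub _).2 (hx _).1
    · exact (hfit _ hl₀).2 ((hx _).2 l hl₀)

theorem ncard_isGuard (f : FV n → Role) :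
    {v | (f v).isGuard}.ncard = ∑ i ∈ Finset.range n, (column f i).weight := by
  have hsum : {v | (f v).isGuard}.ncard = ∑ v, (f v).isGuard.toNat := by
    rw [← Finset.coe_filter_univ, Set.ncard_coe_finset, Finset.card_filter]
    simp only [Bool.toNat, Bool.cond_eq_ite]
  rw [hsum, Fintype.sum_prod_type, ← Fin.sum_univ_eq_sum_range]
  simp only [Fin.sum_univ_four, Column.weight, column, Function.comp_apply, site_val]

theorem three_mul_lt_two_mul_ncard_of_four_le {n : ℕ} (hn : 4 ≤ n) {S : Set (FV n)}
    (hS : IsSecureDominatingSet (flowerSnark n) S) : 3 * n < 2 * S.ncard := by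
  have : NeZero n := ⟨by omega⟩
  have hstrip := (isRoleLabelling_iff_isStrip_column (by omega)).1
    (isRoleLabelling_role (cliqueFree_three hn) hS)
  have hguard : {v | (role (flowerSnark n) S v).isGuard} = S := Set.ext fun _ => isGuard_role
  rw [← hguard, ncard_isGuard]
  exact hstrip.three_mul_lt (by omega) (column_add _)

end FlowerSnark

namespace FlowerSnark

instance (n : ℕ) : DecidableRel (flowerSnark n).Adj :=
  inferInstanceAs (DecidableRel (SimpleGraph.fromRel _).Adj)

/-- The vertices of `J_3`, listed for the exhaustive search below. -/
def vertices : List (FV 3) := [0, 1, 2].flatMap fun i => [0, 1, 2, 3].map fun k => (i, k)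

/-- The closed neighbourhood of a vertex of `J_3`, as a list; `rotate` has order `6`. -/
def closedNeighbors (v : FV 3) : List (FV 3) :=
  v :: if v.2 = 0 then [(v.1, 1), (v.1, 2), (v.1, 3)] else [(v.1, 0), rotate v, rotate^[5] v]

/-- Domination of `J_3` by the members of a list, in a form that is evaluated efficiently. -/
def Dominates (s : List (FV 3)) : Prop :=
  ∀ v ∈ vertices, ∃ w ∈ closedNeighbors v, w ∈ s

instance : DecidablePred Dominates := fun s =>
  inferInstanceAs (Decidable (∀ v ∈ vertices, ∃ w ∈ closedNeighbors v, w ∈ s))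

theorem mem_vertices : ∀ v, v ∈ vertices := by decide +kernel

theorem nodup_vertices : vertices.Nodup := by decide +kernel

theorem mem_closedNeighbors_iff :
    ∀ v w : FV 3, w ∈ closedNeighbors v ↔ w = v ∨ (flowerSnark 3).Adj v w := by
  decide +kernel

theorem dominates_iff {s : List (FV 3)} :
    Dominates s ↔ IsDominatingSet (flowerSnark 3) {v | v ∈ s} := by
  simp only [Dominates, mem_vertices, mem_closedNeighbors_iff, forall_const]
  refine forall_congr' fun v => ⟨?_, fun h => ?_⟩
  · rintro ⟨w, rfl | hvw, hw⟩ hv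
    · exact absurd hw hv
    · exact ⟨w, hw, hvw⟩
  · by_cases hv : v ∈ s
    · exact ⟨v, Or.inl rfl, hv⟩
    · obtain ⟨w, hw, hvw⟩ := h hv
      exact ⟨w, Or.inr hvw, hw⟩

theorem exists_undefended : ∀ s ∈ vertices.sublistsLen 4, Dominates s →
    ∃ v ∈ vertices, v ∉ s ∧ ∀ w ∈ closedNeighbors v, w ∈ s →
      ¬ Dominates (v :: s.filter (· ≠ w)) := by
  decide +kernel

theorem four_lt_ncard {S : Set (FV 3)} (hS : IsSecureDominatingSet (flowerSnark 3) S) :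
    4 < S.ncard := by
  classical
  by_contra! hcard
  rw [Set.ncard_eq_toFinset_card'] at hcard
  obtain ⟨t, hSt, -, htcard⟩ := Finset.exists_subsuperset_card_eq (Finset.subset_univ S.toFinset)
    hcard (by simp)
  set s := vertices.filter (· ∈ t) with hs
  have hmem {v : FV 3} : v ∈ s ↔ v ∈ t := by simp [hs, mem_vertices]
  have hlength : s.length = 4 := by
    rw [← htcard, ← List.toFinset_card_of_nodup (nodup_vertices.filter _)]
    exact congrArg Finset.card (Finset.ext fun v => List.mem_toFinset.trans hmem)
  have hsecure : IsSecureDominatingSet (flowerSnark 3) {v | v ∈ s} :=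
    hS.mono fun v hv => hmem.2 (hSt (Set.mem_toFinset.2 hv))
  obtain ⟨v, -, hv, hundef⟩ := exists_undefended s
    (List.mem_sublistsLen.2 ⟨List.filter_sublist, hlength⟩) (dominates_iff.2 hsecure.1)
  obtain ⟨w, hw, hvw, hdom⟩ := hsecure.2 v hv
  refine hundef w ((mem_closedNeighbors_iff v w).2 (Or.inr hvw)) hw (dominates_iff.2 ?_)
  exact hdom.mono fun u hu => by simpa using hu

theorem three_mul_lt_two_mul_ncard {n : ℕ} (hn : 3 ≤ n) {S : Set (FV n)}
    (hS : IsSecureDominatingSet (flowerSnark n) S) : 3 * n < 2 * S.ncard := by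
  obtain rfl | hn := hn.eq_or_lt
  · have := four_lt_ncard hS
    omega
  · exact three_mul_lt_two_mul_ncard_of_four_le hn hS

end FlowerSnark

namespace Column

theorem IsFiniteStrip.hubCompatible_and_fits {t : List Column} (ht : IsFiniteStrip t) {i : ℕ}
    (hi : i + 2 < t.length) : HubCompatible t[i] ∧ Fits t[i] t[i + 1] t[i + 2] := by
  induction i generalizing t with
  | zero =>
    match t with
    | _ :: _ :: _ :: _ => exact ⟨ht.1, ht.2.1.2⟩
  | succ i ih =>
    match t with
    | _ :: t => exact ih ht.2.2 (Nat.lt_of_succ_lt_succ hi)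

theorem hubCompatible_twist_iff {x : Column} : HubCompatible x.twist ↔ HubCompatible x := by
  have hcomp : ![x 1, x 3, x 2] = ![x 1, x 2, x 3] ∘ Equiv.swap 1 2 := by
    ext i
    fin_cases i <;> rfl
  exact (iff_of_eq (congrArg (Compatible · (x 0)) hcomp)).trans (compatible_comp_equiv _)

theorem fits_twist_iff {l x r : Column} : Fits l.twist x.twist r.twist ↔ Fits l x r :=
  (Equiv.swap 2 3).forall_congr fun {_} => imp_congr (by decide +revert) Iff.rfl

theorem isStrip_of_forall_lt {n : ℕ} (hn : 0 < n) {x : ℕ → Column}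
    (htwist : ∀ i, x (i + n) = (x i).twist)
    (hx : ∀ i < n, HubCompatible (x i) ∧ Fits (x i) (x (i + 1)) (x (i + 2))) : IsStrip x := by
  intro i
  induction i using Nat.strong_induction_on with
  | h i ih =>
    obtain hi | hi := lt_or_ge i n
    · exact hx i hi
    · obtain ⟨j, rfl⟩ := Nat.exists_eq_add_of_le' hi
      rw [add_right_comm j n 1, add_right_comm j n 2, htwist, htwist, htwist,
        hubCompatible_twist_iff, fits_twist_iff]
      exact ih j (by omega)

/-- A word of columns that, followed by its twisted copy, satisfies all local conditions, so that
it closes up to a labelling of a flower snark. -/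
def IsTwistedCycle (t : List Column) : Prop :=
  IsFiniteStrip (t ++ (t.take 2).map twist)

instance : DecidablePred IsTwistedCycle := fun t =>
  inferInstanceAs (Decidable (IsFiniteStrip (t ++ (t.take 2).map twist)))

/-- Four columns of total weight `6` that may follow each other cyclically without a twist. -/
def period : Fin 4 → Column :=
  ![![solo, solo, shared, tied], ![solo, solo, tied, shared], ![shared, tied, shared, free],
    ![shared, tied, free, shared]]

/-- A column of weight `2` that lets a word of columns close up with a twist. -/
def bridge : Column := ![free, shared, free, shared]

theorem IsTwistedCycle.prepend_period {t : List Column}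
    (ht : IsTwistedCycle (period 0 :: period 1 :: t)) :
    IsTwistedCycle (period 0 :: period 1 :: period 2 :: period 3 :: period 0 :: period 1 :: t) :=
  ⟨by decide, ⟨by decide, by decide⟩, by decide, ⟨by decide, by decide⟩,
    by decide, ⟨by decide, by decide⟩, by decide, ⟨by decide, by decide⟩, ht⟩

theorem exists_isTwistedCycle_cons : ∀ n, ∃ t : List Column,
    t.length = n + 2 ∧ IsTwistedCycle (period 0 :: period 1 :: t) ∧
      (t.map weight).sum = 3 * n / 2 + 5
  | 0 => ⟨[period 2, ![shared, tied, free, free]], by decide⟩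
  | 1 => ⟨[period 2, bridge, period 2], by decide⟩
  | 2 => ⟨[period 2, bridge, bridge, period 2], by decide⟩
  | 3 => ⟨[period 2, period 3, period 0, bridge, period 2], by decide⟩
  | n + 4 => by
    obtain ⟨t, hlength, ht, hsum⟩ := exists_isTwistedCycle_cons n
    refine ⟨period 2 :: period 3 :: period 0 :: period 1 :: t, by simp [hlength],
      ht.prepend_period, ?_⟩
    have hperiod : weight (period 2) + (weight (period 3) + (weight (period 0) + weight (period 1)))
      = 6 := by decide
    simp only [List.map_cons, List.sum_cons, hsum]
    omega

theorem exists_isTwistedCycle {n : ℕ} (hn : 3 ≤ n) : ∃ t : List Column,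
    t.length = n ∧ IsTwistedCycle t ∧ (t.map weight).sum = 3 * n / 2 + 1 := by
  obtain rfl | hn := hn.eq_or_lt
  · exact ⟨[period 0, bridge, period 2], by decide⟩
  · obtain ⟨t, hlength, ht, hsum⟩ := exists_isTwistedCycle_cons (n - 4)
    refine ⟨_, ?_, ht, ?_⟩
    · simp only [List.length_cons, hlength]
      omega
    · have hperiod : weight (period 0) + weight (period 1) = 2 := by decide
      simp only [List.map_cons, List.sum_cons, hsum]
      omega

end Column

namespace FlowerSnark

theorem exists_isSecureDominatingSet_of_isTwistedCycle {t : List Column} (hlength : 3 ≤ t.length)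
    (ht : Column.IsTwistedCycle t) : ∃ S, IsSecureDominatingSet (flowerSnark t.length) S ∧
      S.ncard = (t.map Column.weight).sum := by
  have : NeZero t.length := ⟨by omega⟩
  let f : FV t.length → Role := fun v => t[v.1] v.2
  have hcolumn {i : ℕ} (hi : i < t.length) : column f i = t[i] :=
    funext fun k => congrArg f (site_val ⟨i, hi⟩ k)
  have hword {i : ℕ} (hi : i < t.length + 2) :
      (t ++ (t.take 2).map Column.twist)[i]'(by simp; omega) = column f i := by
    obtain hi' | hi' := lt_or_ge i t.length
    · rw [List.getElem_append_left hi', hcolumn hi']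
    · obtain ⟨j, rfl⟩ := Nat.exists_eq_add_of_le' hi'
      rw [column_add, hcolumn (by omega), List.getElem_append_right hi']
      simp
  have hstrip : Column.IsStrip (column f) := by
    refine Column.isStrip_of_forall_lt (NeZero.pos _) (column_add f) fun i hi => ?_
    rw [← hword (by omega), ← hword (by omega), ← hword (by omega)]
    exact ht.hubCompatible_and_fits (by simp; omega)
  refine ⟨_, ((isRoleLabelling_iff_isStrip_column hlength).2 hstrip).isSecureDominatingSet, ?_⟩
  rw [ncard_isGuard, ← Fin.sum_univ_eq_sum_range, ← Fin.sum_univ_fun_getElem]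
  exact Finset.sum_congr rfl fun i _ => congrArg Column.weight (hcolumn i.isLt)

theorem secureDominationNumber_eq {n : ℕ} (hn : 3 ≤ n) :
    secureDominationNumber n = 3 * n / 2 + 1 := by
  obtain ⟨t, rfl, ht, hsum⟩ := Column.exists_isTwistedCycle hn
  obtain ⟨S, hS, hcard⟩ := exists_isSecureDominatingSet_of_isTwistedCycle hn ht
  refine IsLeast.csInf_eq ⟨⟨S, hS, hcard.trans hsum⟩, ?_⟩
  rintro _ ⟨S, hS, rfl⟩
  have := three_mul_lt_two_mul_ncard hn hS
  omega

end FlowerSnark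

/-- For every `n ≥ 3`, the secure domination number of the flower snark `J_n`
equals `⌈(3n+1)/2⌉`. -/
theorem flowerSnark_secureDomination (n : ℕ) (hn : 3 ≤ n) :
    (secureDominationNumber n : ℤ) = ⌈(3 * (n : ℚ) + 1) / 2⌉ := by
  have hvalue := FlowerSnark.secureDominationNumber_eq hn
  have hlower : 3 * n + 1 ≤ 2 * secureDominationNumber n := by omega
  have hupper : 2 * secureDominationNumber n ≤ 3 * n + 2 := by omega
  qify at hlower hupper
  rw [eq_comm, Int.ceil_eq_iff, Int.cast_natCast]
  constructor <;> linarith
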